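/- arXiv:1901.01178 — 2 statements merged into one kernel-verified Lean document; each statement's English description precedes it below -/
import Mathlib

section
/- Let S be a finite set and let q₀, q₁, c₀, c₁, r : S → ℝ be nonnegative functions such that each of the five pointwise products q₀·c₀, q₁·c₁, q₁·c₀, q₀·r and q₁·r defines a probability distribution on S, and such that c₁(s) = r(s) for every s ∈ S with q₁(s) ≠ 0 (equivalently q₁·c₁ = q₁·r as distributions). Then h²(q₀·c₀, q₁·c₁) ≥ (1/2)·h²(q₀·r, q₁·r). -/
noncomputable section

/-- Hellinger distance between two distributions on a finite set:
`h(P,Q) = (1/√2)·(∑ ω, (√(P ω) − √(Q ω))²)^{1/2}`. -/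
def hellinger {Ω : Type*} [Fintype Ω] (P Q : Ω → ℝ) : ℝ :=
  (1 / Real.sqrt 2) * Real.sqrt (∑ ω, (Real.sqrt (P ω) - Real.sqrt (Q ω)) ^ 2)

/-!
Since `q₁c₁ = q₁r`, write `a, b, x, y` for the square roots of `q₀, q₁, c₀, r` at a point. Then
`2(ax - by)² = (ay - by)² + (a² - b²)(x² - y²) + (a - b)²x² + 2ab(x - y)²`,
whose last two terms are nonnegative. Summed over `S`, the term `(a² - b²)(x² - y²)` is the
alternating sum of the total masses of `q₀c₀`, `q₀r`, `q₁c₀` and `q₁r`, namely `1 - 1 - 1 + 1 = 0`.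
-/

theorem hellinger_sq {Ω : Type*} [Fintype Ω] (P Q : Ω → ℝ) :
    hellinger P Q ^ 2 = (1 / 2) * ∑ ω, (√(P ω) - √(Q ω)) ^ 2 := by
  have sum_nonneg : 0 ≤ ∑ ω, (√(P ω) - √(Q ω)) ^ 2 :=
    Finset.sum_nonneg fun _ _ => sq_nonneg _
  rw [hellinger, mul_pow, Real.sq_sqrt sum_nonneg, div_pow, one_pow, Real.sq_sqrt zero_le_two]

theorem two_mul_sq_mul_sub_mul {R : Type*} [CommRing R] (a b x y : R) :
    2 * (a * x - b * y) ^ 2 =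
      (a * y - b * y) ^ 2 + (a ^ 2 - b ^ 2) * (x ^ 2 - y ^ 2) +
        ((a - b) ^ 2 * x ^ 2 + 2 * (a * b) * (x - y) ^ 2) := by
  ring

theorem sq_sqrt_sub_sqrt_add_mul_le {p q c r : ℝ}
    (hp : 0 ≤ p) (hq : 0 ≤ q) (hc : 0 ≤ c) (hr : 0 ≤ r) :
    (√(p * r) - √(q * r)) ^ 2 + (p - q) * (c - r) ≤ 2 * (√(p * c) - √(q * r)) ^ 2 := by
  have remainder_nonneg : 0 ≤ (√p - √q) ^ 2 * √c ^ 2 + 2 * (√p * √q) * (√c - √r) ^ 2 := by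
    positivity
  calc
    (√(p * r) - √(q * r)) ^ 2 + (p - q) * (c - r)
      = (√p * √r - √q * √r) ^ 2 + (√p ^ 2 - √q ^ 2) * (√c ^ 2 - √r ^ 2) := by
        simp only [Real.sqrt_mul hp, Real.sqrt_mul hq, Real.sq_sqrt, hp, hq, hc, hr]
    _ ≤ 2 * (√p * √c - √q * √r) ^ 2 := by
        rw [two_mul_sq_mul_sub_mul]
        exact le_add_of_nonneg_right remainder_nonneg
    _ = 2 * (√(p * c) - √(q * r)) ^ 2 := by
        rw [Real.sqrt_mul hp, Real.sqrt_mul hq]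

theorem diagonal_lemma_special_general {S : Type*} [Fintype S] {q₀ q₁ c₀ c₁ r : S → ℝ}
    (hq₀ : ∀ s, 0 ≤ q₀ s) (hq₁ : ∀ s, 0 ≤ q₁ s) (hc₀ : ∀ s, 0 ≤ c₀ s) (hr : ∀ s, 0 ≤ r s)
    (hcorr : 0 ≤ ∑ s, (q₀ s - q₁ s) * (c₀ s - r s)) (hcr : ∀ s, q₁ s ≠ 0 → c₁ s = r s) :
    (hellinger (fun s => q₀ s * c₀ s) (fun s => q₁ s * c₁ s)) ^ 2 ≥
      (1 / 2) * (hellinger (fun s => q₀ s * r s) (fun s => q₁ s * r s)) ^ 2 := by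
  have q₁_mul_c₁ (s : S) : q₁ s * c₁ s = q₁ s * r s :=
    mul_eq_mul_left_iff.mpr (or_iff_not_imp_right.mpr (hcr s))
  have sum_le :
      ∑ s, (√(q₀ s * r s) - √(q₁ s * r s)) ^ 2 + ∑ s, (q₀ s - q₁ s) * (c₀ s - r s) ≤
        2 * ∑ s, (√(q₀ s * c₀ s) - √(q₁ s * r s)) ^ 2 := by
    rw [← Finset.sum_add_distrib, Finset.mul_sum]
    exact Finset.sum_le_sum fun s _ =>
      sq_sqrt_sub_sqrt_add_mul_le (hq₀ s) (hq₁ s) (hc₀ s) (hr s)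
  simp only [hellinger_sq, q₁_mul_c₁]
  linarith

/-- Abstract form of the specialized diagonal lemma: if the five pointwise products
`q₀·c₀, q₁·c₁, q₁·c₀, q₀·r, q₁·r` of nonnegative functions are probability
distributions on the finite set `S`, and `c₁ = r` wherever `q₁ ≠ 0`, then
`h²(q₀·c₀, q₁·c₁) ≥ (1/2)·h²(q₀·r, q₁·r)`. -/
theorem diagonal_lemma_special {S : Type*} [Fintype S]
    (q₀ q₁ c₀ c₁ r : S → ℝ)
    (hq₀ : ∀ s, 0 ≤ q₀ s) (hq₁ : ∀ s, 0 ≤ q₁ s)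
    (hc₀ : ∀ s, 0 ≤ c₀ s) (hc₁ : ∀ s, 0 ≤ c₁ s) (hr : ∀ s, 0 ≤ r s)
    (h1 : ∑ s, q₀ s * c₀ s = 1) (h2 : ∑ s, q₁ s * c₁ s = 1)
    (h3 : ∑ s, q₁ s * c₀ s = 1) (h4 : ∑ s, q₀ s * r s = 1)
    (h5 : ∑ s, q₁ s * r s = 1)
    (hcr : ∀ s, q₁ s ≠ 0 → c₁ s = r s) :
    (hellinger (fun s => q₀ s * c₀ s) (fun s => q₁ s * c₁ s)) ^ 2 ≥
      (1 / 2) * (hellinger (fun s => q₀ s * r s) (fun s => q₁ s * r s)) ^ 2 := by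
  refine diagonal_lemma_special_general hq₀ hq₁ hc₀ hr (le_of_eq ?_) hcr
  simp only [sub_mul, mul_sub, Finset.sum_sub_distrib, h1, h3, h4, h5, sub_self]
end
end

section
/- Let Xᵢ, X_{−i}, Rᵢ, R_{−i}, M, Z, Π be discrete random variables with finite range on a common probability space, and write X = (Xᵢ, X_{−i}) and R = (Rᵢ, R_{−i}). Assume: (a) H(Π | X, R) = 0 (Π is determined by X and R); (b) I(M; R_{−i} | X, Rᵢ, Z) = 0; and (c) I(Π; Z | X, Rᵢ) = 0. Then I(M; Π | Xᵢ, Rᵢ, Z) ≤ I(X_{−i}; Π | Xᵢ, Rᵢ). -/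
open Finset

noncomputable section

open Classical in
/-- Probability of an event under a probability mass function on a finite sample space. -/
def pr {Ω : Type*} [Fintype Ω] (p : Ω → ℝ) (E : Ω → Prop) : ℝ :=
  ∑ ω ∈ Finset.univ.filter E, p ω

open Classical in
/-- Shannon entropy (in bits) of a discrete random variable on a finite sample space. -/
def entropy {Ω A : Type*} [Fintype Ω] (p : Ω → ℝ) (X : Ω → A) : ℝ :=
  -∑ a ∈ Finset.univ.image X,
    pr p (fun ω => X ω = a) * Real.logb 2 (pr p (fun ω => X ω = a))

open Classical in
/-- Conditional entropy `H(X | Y) = ∑_y Pr[Y=y] · H(X | Y=y)` (in bits). -/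
def condEntropy {Ω A B : Type*} [Fintype Ω] (p : Ω → ℝ) (X : Ω → A) (Y : Ω → B) : ℝ :=
  ∑ b ∈ Finset.univ.image Y,
    pr p (fun ω => Y ω = b) *
      (-∑ a ∈ Finset.univ.image X,
        (pr p (fun ω => X ω = a ∧ Y ω = b) / pr p (fun ω => Y ω = b)) *
          Real.logb 2
            (pr p (fun ω => X ω = a ∧ Y ω = b) / pr p (fun ω => Y ω = b)))

/-- Conditional mutual information `I(X;Y | Z) = H(X|Z) − H(X|Y,Z)` (in bits). -/
def condMutualInfo {Ω A B C : Type*} [Fintype Ω] (p : Ω → ℝ)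
    (X : Ω → A) (Y : Ω → B) (Z : Ω → C) : ℝ :=
  condEntropy p X Z - condEntropy p X (fun ω => (Y ω, Z ω))

/-!
Revealing `X₋ᵢ` gives `I(M; Π | Xᵢ Rᵢ Z) ≤ I(X₋ᵢ; Π | Xᵢ Rᵢ Z) + I(M; Π | X Rᵢ Z)`.
By the chain rule, removing `Z` from the conditioning in the first term costs at most
`I(Π; Z | X Rᵢ)`. In the second term `Π` is, up to an error `H(Π | X R)`, a function of `R₋ᵢ` and
the conditioning, so data processing bounds it by `I(M; R₋ᵢ | X Rᵢ Z) + H(Π | X R)`.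
The only analytic input is `0 ≤ I(X; Y | Z)`, which is Gibbs' inequality for the ratio of
`P(x, z) P(y, z) / P(z)` to `P(x, y, z)`.
-/

section Pr

variable {Ω A B : Type*} [Fintype Ω] {p : Ω → ℝ}

lemma pr_nonneg (hp : ∀ ω, 0 ≤ p ω) (E : Ω → Prop) : 0 ≤ pr p E :=
  sum_nonneg fun _ _ => hp _

lemma pr_mono (hp : ∀ ω, 0 ≤ p ω) {E F : Ω → Prop} (h : ∀ ω, E ω → F ω) : pr p E ≤ pr p F := by
  classical
  exact sum_le_sum_of_subset_of_nonneg (monotone_filter_right _ fun ω _ => h ω) fun _ _ _ => hp _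

lemma pr_fiber_pos (hp : ∀ ω, 0 ≤ p ω) (X : Ω → A) {ω : Ω} (hω : 0 < p ω) :
    0 < pr p (fun ω' => X ω' = X ω) :=
  sum_pos' (fun _ _ => hp _) ⟨ω, by simpa using hω⟩

open Classical in
lemma sum_mul_comp_eq_sum_pr_mul (p : Ω → ℝ) {X : Ω → A} {s : Finset A} (hX : ∀ ω, X ω ∈ s)
    (f : A → ℝ) : ∑ ω, p ω * f (X ω) = ∑ a ∈ s, pr p (fun ω => X ω = a) * f a := by
  rw [← sum_fiberwise_of_maps_to (fun ω _ => hX ω)]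
  refine sum_congr rfl fun a _ => ?_
  rw [pr, sum_mul]
  exact sum_congr rfl fun ω hω => by rw [(mem_filter.1 hω).2]

open Classical in
lemma sum_pr_eq (p : Ω → ℝ) (X : Ω → A) :
    ∑ a ∈ univ.image X, pr p (fun ω => X ω = a) = ∑ ω, p ω := by
  simpa using (sum_mul_comp_eq_sum_pr_mul p (fun ω => mem_image_of_mem X (mem_univ ω)) 1).symm

open Classical in
lemma sum_pr_prod_eq (p : Ω → ℝ) (X : Ω → A) (Y : Ω → B) (b : B) :
    ∑ a ∈ univ.image X, pr p (fun ω => (X ω, Y ω) = (a, b)) = pr p (fun ω => Y ω = b) := by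
  rw [pr, ← sum_fiberwise_of_maps_to fun ω _ => mem_image_of_mem X (mem_univ ω)]
  simp only [pr, filter_filter, Prod.mk.injEq, and_comm]

end Pr

section Entropy

variable {Ω A B C : Type*} [Fintype Ω] {p : Ω → ℝ}

lemma entropy_eq_neg_sum (p : Ω → ℝ) (X : Ω → A) :
    entropy p X = -∑ ω, p ω * Real.logb 2 (pr p (fun ω' => X ω' = X ω)) := by
  classical
  rw [entropy, sum_mul_comp_eq_sum_pr_mul p (fun ω => mem_image_of_mem X (mem_univ ω))
    fun a => Real.logb 2 (pr p fun ω' => X ω' = a)]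

lemma entropy_congr (p : Ω → ℝ) {X : Ω → A} {Y : Ω → B}
    (h : ∀ ω ω', X ω = X ω' ↔ Y ω = Y ω') : entropy p X = entropy p Y := by
  simp only [entropy_eq_neg_sum, h]

lemma condEntropy_eq_neg_sum (hp : ∀ ω, 0 ≤ p ω) (X : Ω → A) (Y : Ω → B) :
    condEntropy p X Y = -∑ ω, p ω * Real.logb 2
      (pr p (fun ω' => (X ω', Y ω') = (X ω, Y ω)) / pr p (fun ω' => Y ω' = Y ω)) := by
  classical
  have pr_mul_condPr (a : A) (b : B) : pr p (fun ω => Y ω = b) *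
      (pr p (fun ω => X ω = a ∧ Y ω = b) / pr p (fun ω => Y ω = b)) =
        pr p (fun ω => X ω = a ∧ Y ω = b) :=
    mul_div_cancel_of_imp' fun h =>
      le_antisymm (h ▸ pr_mono hp fun _ => And.right) (pr_nonneg hp _)
  have mem_images (ω : Ω) : (X ω, Y ω) ∈ univ.image X ×ˢ univ.image Y :=
    mk_mem_product (mem_image_of_mem X (mem_univ ω)) (mem_image_of_mem Y (mem_univ ω))
  rw [sum_mul_comp_eq_sum_pr_mul p mem_images fun ab => Real.logb 2
    (pr p (fun ω' => (X ω', Y ω') = ab) / pr p (fun ω' => Y ω' = ab.2)), sum_product_right]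
  simp only [condEntropy, mul_neg, mul_sum, ← mul_assoc, pr_mul_condPr, sum_neg_distrib,
    Prod.mk.injEq]

lemma condEntropy_eq_entropy_sub (hp : ∀ ω, 0 ≤ p ω) (X : Ω → A) (Y : Ω → B) :
    condEntropy p X Y = entropy p (fun ω => (X ω, Y ω)) - entropy p Y := by
  rw [condEntropy_eq_neg_sum hp, entropy_eq_neg_sum, entropy_eq_neg_sum, neg_sub_neg,
    ← sum_sub_distrib, ← sum_neg_distrib]
  refine sum_congr rfl fun ω _ => ?_
  rcases (hp ω).eq_or_lt with hω | hω
  · simp [← hω]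
  · rw [Real.logb_div (pr_fiber_pos hp (fun ω => (X ω, Y ω)) hω).ne' (pr_fiber_pos hp Y hω).ne']
    ring

lemma condEntropy_nonneg (hp : ∀ ω, 0 ≤ p ω) (X : Ω → A) (Y : Ω → B) : 0 ≤ condEntropy p X Y := by
  have ratio_nonneg (E F : Ω → Prop) : 0 ≤ pr p E / pr p F :=
    div_nonneg (pr_nonneg hp E) (pr_nonneg hp F)
  refine sum_nonneg fun b _ => mul_nonneg (pr_nonneg hp _) <| neg_nonneg.2 <|
    sum_nonpos fun a _ => mul_nonpos_of_nonneg_of_nonpos (ratio_nonneg _ _) <|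
      Real.logb_nonpos one_lt_two (ratio_nonneg _ _) <|
        div_le_one_of_le₀ (pr_mono hp fun _ => And.right) (pr_nonneg hp _)

lemma condMutualInfo_eq_entropy (hp : ∀ ω, 0 ≤ p ω) (X : Ω → A) (Y : Ω → B) (Z : Ω → C) :
    condMutualInfo p X Y Z =
      entropy p (fun ω => (X ω, Z ω)) + entropy p (fun ω => (Y ω, Z ω)) -
        entropy p (fun ω => (X ω, Y ω, Z ω)) - entropy p Z := by
  rw [condMutualInfo, condEntropy_eq_entropy_sub hp, condEntropy_eq_entropy_sub hp]
  ring

lemma condMutualInfo_comm (hp : ∀ ω, 0 ≤ p ω) (X : Ω → A) (Y : Ω → B) (Z : Ω → C) :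
    condMutualInfo p X Y Z = condMutualInfo p Y X Z := by
  have h : entropy p (fun ω => (X ω, Y ω, Z ω)) = entropy p (fun ω => (Y ω, X ω, Z ω)) :=
    entropy_congr p fun ω ω' => by simp only [Prod.mk.injEq, and_left_comm]
  rw [condMutualInfo_eq_entropy hp, condMutualInfo_eq_entropy hp, h]
  ring

end Entropy

section Nonneg

variable {Ω A B C : Type*} [Fintype Ω] {p : Ω → ℝ}

lemma sum_mul_logb_nonpos {b : ℝ} (hb : 1 < b) (hp : ∀ ω, 0 ≤ p ω) {q : Ω → ℝ}
    (hq : ∀ ω, 0 < p ω → 0 < q ω) (hsum : ∑ ω, p ω * q ω ≤ ∑ ω, p ω) :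
    ∑ ω, p ω * Real.logb b (q ω) ≤ 0 := by
  have mul_log_le (ω : Ω) : p ω * Real.log (q ω) ≤ p ω * q ω - p ω := by
    rcases (hp ω).eq_or_lt with hω | hω
    · simp [← hω]
    · linarith [mul_le_mul_of_nonneg_left (Real.log_le_sub_one_of_pos (hq ω hω)) (hp ω)]
  simp only [Real.logb, ← mul_div_assoc, ← sum_div]
  refine div_nonpos_of_nonpos_of_nonneg ?_ (Real.log_pos hb).le
  calc ∑ ω, p ω * Real.log (q ω)
      ≤ ∑ ω, (p ω * q ω - p ω) := sum_le_sum fun ω _ => mul_log_le ω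
    _ ≤ 0 := by rw [sum_sub_distrib]; exact sub_nonpos.2 hsum

/-- The density of the conditionally independent coupling of `(X, Z)` and `(Y, Z)` over `Z` with
respect to the joint law of `(X, Y, Z)`, evaluated at the point `(x, y, z)`; its expected logarithm
is `-I(X;Y | Z)`. It takes the value `0` where the joint law vanishes. -/
def condIndepRatio (p : Ω → ℝ) (X : Ω → A) (Y : Ω → B) (Z : Ω → C) (v : A × B × C) : ℝ :=
  pr p (fun ω => (X ω, Z ω) = (v.1, v.2.2)) * pr p (fun ω => (Y ω, Z ω) = v.2) /
    (pr p (fun ω => (X ω, Y ω, Z ω) = v) * pr p (fun ω => Z ω = v.2.2))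

lemma condIndepRatio_pos (hp : ∀ ω, 0 ≤ p ω) (X : Ω → A) (Y : Ω → B) (Z : Ω → C) {ω : Ω}
    (hω : 0 < p ω) : 0 < condIndepRatio p X Y Z (X ω, Y ω, Z ω) :=
  div_pos (mul_pos (pr_fiber_pos hp _ hω) (pr_fiber_pos hp _ hω))
    (mul_pos (pr_fiber_pos hp _ hω) (pr_fiber_pos hp _ hω))

lemma sum_mul_condIndepRatio_le (hp : ∀ ω, 0 ≤ p ω) (X : Ω → A) (Y : Ω → B) (Z : Ω → C) :
    ∑ ω, p ω * condIndepRatio p X Y Z (X ω, Y ω, Z ω) ≤ ∑ ω, p ω := by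
  classical
  have mem_images (ω : Ω) :
      (X ω, Y ω, Z ω) ∈ univ.image X ×ˢ univ.image Y ×ˢ univ.image Z := by
    simp only [mem_product, mem_image_of_mem, mem_univ, and_self]
  have mul_ratio_le {a j c : ℝ} (ha : 0 ≤ a) (hc : 0 ≤ c) : j * (a / (j * c)) ≤ a / c := by
    rcases eq_or_ne j 0 with rfl | hj
    · simpa using div_nonneg ha hc
    · rw [← mul_div_assoc, mul_div_mul_left _ _ hj]
  rw [sum_mul_comp_eq_sum_pr_mul p mem_images]
  calc ∑ v ∈ univ.image X ×ˢ univ.image Y ×ˢ univ.image Z,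
        pr p (fun ω => (X ω, Y ω, Z ω) = v) * condIndepRatio p X Y Z v
      ≤ ∑ v ∈ univ.image X ×ˢ univ.image Y ×ˢ univ.image Z,
        pr p (fun ω => (X ω, Z ω) = (v.1, v.2.2)) * pr p (fun ω => (Y ω, Z ω) = v.2) /
          pr p (fun ω => Z ω = v.2.2) :=
        sum_le_sum fun v _ => mul_ratio_le (mul_nonneg (pr_nonneg hp _) (pr_nonneg hp _))
          (pr_nonneg hp _)
    _ = ∑ c ∈ univ.image Z, (∑ a ∈ univ.image X, pr p (fun ω => (X ω, Z ω) = (a, c))) *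
          (∑ b ∈ univ.image Y, pr p (fun ω => (Y ω, Z ω) = (b, c))) /
            pr p (fun ω => Z ω = c) := by
        rw [sum_product, sum_congr rfl fun a _ => sum_product_right _ _ _, sum_comm]
        simp only [sum_mul_sum, sum_div]
    _ = ∑ c ∈ univ.image Z, pr p (fun ω => Z ω = c) := by
        simp only [sum_pr_prod_eq, mul_self_div_self]
    _ = ∑ ω, p ω := sum_pr_eq p Z

lemma condMutualInfo_eq_neg_sum (hp : ∀ ω, 0 ≤ p ω) (X : Ω → A) (Y : Ω → B) (Z : Ω → C) :
    condMutualInfo p X Y Z =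
      -∑ ω, p ω * Real.logb 2 (condIndepRatio p X Y Z (X ω, Y ω, Z ω)) := by
  simp only [condMutualInfo_eq_entropy hp, entropy_eq_neg_sum, ← sum_neg_distrib,
    ← sum_add_distrib, ← sum_sub_distrib]
  refine sum_congr rfl fun ω _ => ?_
  rcases (hp ω).eq_or_lt with hω | hω
  · simp [← hω]
  · have hXZ := pr_fiber_pos hp (fun ω => (X ω, Z ω)) hω
    have hYZ := pr_fiber_pos hp (fun ω => (Y ω, Z ω)) hω
    have hXYZ := pr_fiber_pos hp (fun ω => (X ω, Y ω, Z ω)) hω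
    have hZ := pr_fiber_pos hp Z hω
    simp only [condIndepRatio]
    rw [Real.logb_div (mul_pos hXZ hYZ).ne' (mul_pos hXYZ hZ).ne',
      Real.logb_mul hXZ.ne' hYZ.ne', Real.logb_mul hXYZ.ne' hZ.ne']
    ring

theorem condMutualInfo_nonneg (hp : ∀ ω, 0 ≤ p ω) (X : Ω → A) (Y : Ω → B) (Z : Ω → C) :
    0 ≤ condMutualInfo p X Y Z := by
  rw [condMutualInfo_eq_neg_sum hp]
  exact neg_nonneg.2 <| sum_mul_logb_nonpos one_lt_two hp
    (fun ω hω => condIndepRatio_pos hp X Y Z hω) (sum_mul_condIndepRatio_le hp X Y Z)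

end Nonneg

section Inequalities

variable {Ω A B B' C C' D : Type*} [Fintype Ω] {p : Ω → ℝ}

lemma condEntropy_le_of_imp (hp : ∀ ω, 0 ≤ p ω) (X : Ω → A) {Y : Ω → B} {Y' : Ω → B'}
    (h : ∀ ω ω', Y ω = Y ω' → Y' ω = Y' ω') : condEntropy p X Y ≤ condEntropy p X Y' := by
  have entropy_joint : entropy p (fun ω => (X ω, Y ω, Y' ω)) = entropy p (fun ω => (X ω, Y ω)) :=
    entropy_congr p fun ω ω' => by grind
  have entropy_cond : entropy p (fun ω => (Y ω, Y' ω)) = entropy p Y :=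
    entropy_congr p fun ω ω' => by grind
  have condEntropy_pair : condEntropy p X (fun ω => (Y ω, Y' ω)) = condEntropy p X Y := by
    rw [condEntropy_eq_entropy_sub hp, condEntropy_eq_entropy_sub hp, entropy_joint, entropy_cond]
  rw [← condEntropy_pair]
  exact sub_nonneg.1 (condMutualInfo_nonneg hp X Y Y')

lemma condEntropy_congr_right (hp : ∀ ω, 0 ≤ p ω) (X : Ω → A) {Y : Ω → B} {Y' : Ω → B'}
    (h : ∀ ω ω', Y ω = Y ω' ↔ Y' ω = Y' ω') : condEntropy p X Y = condEntropy p X Y' :=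
  le_antisymm (condEntropy_le_of_imp hp X fun ω ω' => (h ω ω').1)
    (condEntropy_le_of_imp hp X fun ω ω' => (h ω ω').2)

lemma condMutualInfo_congr_right (hp : ∀ ω, 0 ≤ p ω) (X : Ω → A) (Y : Ω → B) {Z : Ω → C}
    {Z' : Ω → C'} (h : ∀ ω ω', Z ω = Z ω' ↔ Z' ω = Z' ω') :
    condMutualInfo p X Y Z = condMutualInfo p X Y Z' :=
  congrArg₂ (· - ·) (condEntropy_congr_right hp X h) <|
    condEntropy_congr_right hp X fun ω ω' => by simp only [Prod.mk.injEq, h]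

lemma condMutualInfo_le_condEntropy (hp : ∀ ω, 0 ≤ p ω) (X : Ω → A) (Y : Ω → B) (Z : Ω → C) :
    condMutualInfo p X Y Z ≤ condEntropy p Y Z := by
  rw [condMutualInfo_comm hp]
  exact sub_le_self _ (condEntropy_nonneg hp _ _)

lemma condMutualInfo_add_comm (hp : ∀ ω, 0 ≤ p ω) (X : Ω → A) (Y : Ω → B) (Z : Ω → C) (W : Ω → D) :
    condMutualInfo p X Y W + condMutualInfo p X Z (fun ω => (Y ω, W ω)) =
      condMutualInfo p X Z W + condMutualInfo p X Y (fun ω => (Z ω, W ω)) := by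
  have h : condEntropy p X (fun ω => (Z ω, Y ω, W ω)) =
      condEntropy p X (fun ω => (Y ω, Z ω, W ω)) :=
    condEntropy_congr_right hp X fun ω ω' => by simp only [Prod.mk.injEq, and_left_comm]
  simp only [condMutualInfo, h]
  ring

lemma condMutualInfo_le_add (hp : ∀ ω, 0 ≤ p ω) (X : Ω → A) (Y : Ω → B) (Z : Ω → C) (W : Ω → D) :
    condMutualInfo p X Z W ≤
      condMutualInfo p X Y W + condMutualInfo p X Z (fun ω => (Y ω, W ω)) := by
  rw [condMutualInfo_add_comm hp]
  exact le_add_of_nonneg_right (condMutualInfo_nonneg hp _ _ _)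

lemma condMutualInfo_prod_le_add (hp : ∀ ω, 0 ≤ p ω) (X : Ω → A) (Y : Ω → B) (Z : Ω → C)
    (W : Ω → D) :
    condMutualInfo p X Z (fun ω => (Y ω, W ω)) ≤
      condMutualInfo p X Z W + condMutualInfo p X Y (fun ω => (Z ω, W ω)) := by
  rw [← condMutualInfo_add_comm hp]
  exact le_add_of_nonneg_left (condMutualInfo_nonneg hp _ _ _)

lemma condMutualInfo_le_add_condEntropy (hp : ∀ ω, 0 ≤ p ω) (X : Ω → A) (Y : Ω → B) (Z : Ω → C)
    (W : Ω → D) :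
    condMutualInfo p X Z W ≤
      condMutualInfo p X Y W + condEntropy p Z (fun ω => (Y ω, W ω)) :=
  (condMutualInfo_le_add hp X Y Z W).trans <|
    add_le_add_right (condMutualInfo_le_condEntropy hp _ _ _) _

end Inequalities

theorem smic_le_mic_first_half_general {Ω α α' β β' γ δ ε' : Type*} [Fintype Ω]
    (p : Ω → ℝ) (hp : ∀ ω, 0 ≤ p ω)
    (Xi : Ω → α) (Xmi : Ω → α') (Ri : Ω → β) (Rmi : Ω → β')
    (M : Ω → γ) (Z : Ω → δ) (Tr : Ω → ε') :
    condMutualInfo p M Tr (fun ω => (Xi ω, Ri ω, Z ω)) ≤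
      condMutualInfo p Xmi Tr (fun ω => (Xi ω, Ri ω)) +
        condEntropy p Tr (fun ω => ((Xi ω, Xmi ω), (Ri ω, Rmi ω))) +
        condMutualInfo p M Rmi (fun ω => ((Xi ω, Xmi ω), Ri ω, Z ω)) +
        condMutualInfo p Tr Z (fun ω => ((Xi ω, Xmi ω), Ri ω)) := by
  have reveal_Xmi : condMutualInfo p Tr M (fun ω => (Xi ω, Ri ω, Z ω)) ≤
      condMutualInfo p Tr Xmi (fun ω => (Xi ω, Ri ω, Z ω)) +
        condMutualInfo p Tr M (fun ω => ((Xi ω, Xmi ω), Ri ω, Z ω)) := by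
    convert condMutualInfo_le_add hp Tr Xmi M (fun ω => (Xi ω, Ri ω, Z ω)) using 2
    exact condMutualInfo_congr_right hp _ _ fun ω ω' => by grind
  have drop_Z : condMutualInfo p Tr Xmi (fun ω => (Xi ω, Ri ω, Z ω)) ≤
      condMutualInfo p Tr Xmi (fun ω => (Xi ω, Ri ω)) +
        condMutualInfo p Tr Z (fun ω => ((Xi ω, Xmi ω), Ri ω)) := by
    convert condMutualInfo_prod_le_add hp Tr Z Xmi (fun ω => (Xi ω, Ri ω)) using 2 <;>
      exact condMutualInfo_congr_right hp _ _ fun ω ω' => by grind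
  have data_processing : condMutualInfo p M Tr (fun ω => ((Xi ω, Xmi ω), Ri ω, Z ω)) ≤
      condMutualInfo p M Rmi (fun ω => ((Xi ω, Xmi ω), Ri ω, Z ω)) +
        condEntropy p Tr (fun ω => ((Xi ω, Xmi ω), (Ri ω, Rmi ω))) :=
    (condMutualInfo_le_add_condEntropy hp M Rmi Tr _).trans <|
      add_le_add_right (condEntropy_le_of_imp hp Tr fun ω ω' => by grind) _
  rw [condMutualInfo_comm hp M Tr] at data_processing ⊢
  rw [condMutualInfo_comm hp Xmi Tr]
  linarith

/-- First half of `SMIC ≤ MIC`: if the transcript `Tr` is determined by the inputs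
`X = (Xᵢ, X₋ᵢ)` and the randomness `R = (Rᵢ, R₋ᵢ)`, `I(M; R₋ᵢ | X Rᵢ Z) = 0`, and
`I(Tr; Z | X Rᵢ) = 0`, then `I(M; Tr | Xᵢ Rᵢ Z) ≤ I(X₋ᵢ; Tr | Xᵢ Rᵢ)`. -/
theorem smic_le_mic_first_half {Ω α α' β β' γ δ ε' : Type*} [Fintype Ω]
    (p : Ω → ℝ) (hp : ∀ ω, 0 ≤ p ω) (hsum : ∑ ω, p ω = 1)
    (Xi : Ω → α) (Xmi : Ω → α') (Ri : Ω → β) (Rmi : Ω → β')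
    (M : Ω → γ) (Z : Ω → δ) (Tr : Ω → ε')
    (ha : condEntropy p Tr (fun ω => ((Xi ω, Xmi ω), (Ri ω, Rmi ω))) = 0)
    (hb : condMutualInfo p M Rmi (fun ω => ((Xi ω, Xmi ω), Ri ω, Z ω)) = 0)
    (hc : condMutualInfo p Tr Z (fun ω => ((Xi ω, Xmi ω), Ri ω)) = 0) :
    condMutualInfo p M Tr (fun ω => (Xi ω, Ri ω, Z ω)) ≤
      condMutualInfo p Xmi Tr (fun ω => (Xi ω, Ri ω)) := by
  simpa only [ha, hb, hc, add_zero] using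
    smic_le_mic_first_half_general p hp Xi Xmi Ri Rmi M Z Tr
end
end
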